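/- For every f in the Schwartz space on ℝ² and every q ∈ [2,∞), one has ‖f‖_{L^q(ℝ²)} ≤ C·√q·‖f‖_{L²(ℝ²)}^{2/q}·‖∇f‖_{L²(ℝ²)}^{1-2/q}, with a constant C independent of q. -/

import Mathlib

open MeasureTheory Real Set
open scoped ENNReal

noncomputable section

abbrev R2 : Type := EuclideanSpace ℝ (Fin 2)

/-!
The inequality is the Sobolev embedding `‖f‖_{L^q} ≤ K √q ‖f‖_{Ḣ^s}` with `s = d (1/2 - 1/q)`,
followed by interpolation of `Ḣ^s` between `L²` and `Ḣ¹`.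

For the embedding, each level `t > 0` gets its own frequency threshold `r` (Chemin–Xu): the part
of `f` at frequencies below `2r` is bounded in sup norm by `∫_{|ξ| < 2r} |𝓕 f|`, hence, by
Cauchy–Schwarz, by `(∫_{|ξ| < 2r} |ξ|^{-2s})^{1/2} ‖f‖_{Ḣ^s}`, and `r` is chosen so that this is at
most `t / 2`. On `{|f| > t}` the remaining high-frequency part then dominates `|f| / 2`, so
Plancherel bounds `∫_{|f| > t} |f|²` by `4 ∫_{|ξ| > r} |𝓕 f|²`. Integrating over `t`, that is, the
layer cake formula of exponent `q - 2` for the measures `|f|² dx` and `|𝓕 f|² dξ`, gives the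
embedding, with no loss as `q → 2`. The growth `√q` is that of
`(∫_{|ξ| < R} |ξ|^{-2s})^{1/2}`, because `d - 2s = 2d / q`.
-/

open Metric Module
open scoped NNReal FourierTransform SchwartzMap LineDeriv

theorem lintegral_rpow_le_of_meas_lt_le {α β : Type*} {mα : MeasurableSpace α}
    {mβ : MeasurableSpace β} {μ : Measure α} {ν : Measure β} {f : α → ℝ} {g : β → ℝ}
    (hf : AEMeasurable f μ) (hf0 : ∀ x, 0 ≤ f x) (hg : AEMeasurable g ν) (hg0 : ∀ y, 0 ≤ g y)
    {C : ℝ≥0} (h : ∀ t, 0 < t → μ {x | t < f x} ≤ C * ν {y | t < g y}) {p : ℝ} (hp : 0 < p) :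
    ∫⁻ x, ENNReal.ofReal (f x ^ p) ∂μ ≤ C * ∫⁻ y, ENNReal.ofReal (g y ^ p) ∂ν := by
  rw [lintegral_rpow_eq_lintegral_meas_lt_mul μ (.of_forall hf0) hf hp,
    lintegral_rpow_eq_lintegral_meas_lt_mul ν (.of_forall hg0) hg hp, mul_left_comm,
    ← lintegral_const_mul' _ _ ENNReal.coe_ne_top]
  gcongr _ * ?_
  refine setLIntegral_mono' measurableSet_Ioi fun t ht ↦ ?_
  rw [← mul_assoc]
  gcongr
  exact h t ht

theorem lintegral_ball_enorm_rpow_neg {E : Type*} [NormedAddCommGroup E] [NormedSpace ℝ E]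
    [FiniteDimensional ℝ E] [Nontrivial E] [MeasurableSpace E] [BorelSpace E]
    (μ : Measure E) [μ.IsAddHaarMeasure] {a R : ℝ} (ha : a < finrank ℝ E) (hR : 0 < R) :
    ∫⁻ x in ball (0 : E) R, ‖x‖ₑ ^ (-a) ∂μ =
      ENNReal.ofReal (finrank ℝ E / (finrank ℝ E - a) * μ.real (ball 0 1) *
        R ^ (finrank ℝ E - a)) := by
  set d := finrank ℝ E
  have hd1 : 1 ≤ d := finrank_pos
  have hint : IntegrableOn (fun x : E ↦ ‖x‖ ^ (-a)) (ball 0 R) μ :=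
    integrableOn_ball_of_norm_le_rpow (C := 1) hd1 ha
      (.of_forall fun x ↦ by rw [one_mul, norm_of_nonneg (by positivity)])
      (measurable_norm.pow_const _).aestronglyMeasurable
  have hradial : ∀ r ∈ Ioi (0 : ℝ), r ^ (d - 1) • (Iio R).indicator (· ^ (-a)) r =
      (Ioo 0 R).indicator (· ^ (d - a - 1)) r := by
    intro r (hr : 0 < r)
    by_cases hrR : r < R
    · rw [indicator_of_mem (mem_Iio.2 hrR), indicator_of_mem (mem_Ioo.2 ⟨hr, hrR⟩), smul_eq_mul,
        ← rpow_natCast, ← rpow_add hr, Nat.cast_sub hd1]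
      ring_nf
    · simp [hrR]
  have hball : ∫ x in ball (0 : E) R, ‖x‖ ^ (-a) ∂μ =
      d / (d - a) * μ.real (ball 0 1) * R ^ (d - a) := by
    have : (ball (0 : E) R).indicator (fun x ↦ ‖x‖ ^ (-a)) =
        fun x ↦ (Iio R).indicator (· ^ (-a)) ‖x‖ := by
      ext x; simp [indicator]
    rw [← integral_indicator measurableSet_ball, this, integral_fun_norm_addHaar,
      setIntegral_congr_fun measurableSet_Ioi hradial, setIntegral_indicator measurableSet_Ioo,
      inter_eq_right.2 Ioo_subset_Ioi_self, ← integral_Ioc_eq_integral_Ioo,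
      ← intervalIntegral.integral_of_le hR.le, integral_rpow (.inl (by linarith)),
      sub_add_cancel, zero_rpow (by linarith)]
    simp only [smul_eq_mul, nsmul_eq_mul, sub_zero]
    ring
  rw [← hball, ofReal_integral_eq_lintegral_ofReal hint (.of_forall fun x ↦ by positivity)]
  refine lintegral_congr_ae (ae_restrict_of_ae ?_)
  filter_upwards [Measure.ae_ne μ (0 : E)] with x hx
  rw [← ofReal_norm, ENNReal.ofReal_rpow_of_pos (norm_pos_iff.2 hx)]

section Fourier

variable {E F : Type*} [NormedAddCommGroup E] [InnerProductSpace ℝ E] [FiniteDimensional ℝ E]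
  [MeasurableSpace E] [BorelSpace E] [NormedAddCommGroup F]

section NormedSpace

variable [NormedSpace ℂ F]

theorem enorm_fourierInv_le_lintegral_enorm (g : 𝓢(E, F)) (x : E) :
    ‖𝓕⁻ g x‖ₑ ≤ ∫⁻ ξ, ‖g ξ‖ₑ := by
  rw [SchwartzMap.fourierInv_coe, Real.fourierInv_eq]
  exact (enorm_integral_le_lintegral_enorm _).trans_eq <|
    lintegral_congr fun ξ ↦ by simp only [← ofReal_norm, Circle.norm_smul]

/-- The homogeneous Sobolev seminorm `‖f‖_{Ḣ^s}`, with Fourier weight `|ξ|^s` instead of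
`|2πξ|^s`. -/
def homogeneousSobolevNorm (s : ℝ) (f : 𝓢(E, F)) : ℝ≥0∞ :=
  (∫⁻ ξ, ‖ξ‖ₑ ^ (2 * s) * ‖𝓕 f ξ‖ₑ ^ 2) ^ (1 / 2 : ℝ)

theorem homogeneousSobolevNorm_sq (s : ℝ) (f : 𝓢(E, F)) :
    homogeneousSobolevNorm s f ^ 2 = ∫⁻ ξ, ‖ξ‖ₑ ^ (2 * s) * ‖𝓕 f ξ‖ₑ ^ 2 := by
  rw [homogeneousSobolevNorm, ← ENNReal.rpow_two, ← ENNReal.rpow_mul]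
  norm_num

theorem homogeneousSobolevNorm_convexComb_le (f : 𝓢(E, F)) {a b α β : ℝ} (ha : 0 ≤ a)
    (hb : 0 ≤ b) (hα : 0 ≤ α) (hβ : 0 ≤ β) (hαβ : α + β = 1) :
    homogeneousSobolevNorm (α * a + β * b) f ≤
      homogeneousSobolevNorm a f ^ α * homogeneousSobolevNorm b f ^ β := by
  have hsplit : ∀ ξ, ‖ξ‖ₑ ^ (2 * (α * a + β * b)) * ‖𝓕 f ξ‖ₑ ^ 2 =
      (‖ξ‖ₑ ^ (2 * a) * ‖𝓕 f ξ‖ₑ ^ 2) ^ α * (‖ξ‖ₑ ^ (2 * b) * ‖𝓕 f ξ‖ₑ ^ 2) ^ β := by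
    intro ξ
    rw [ENNReal.mul_rpow_of_nonneg _ _ hα, ENNReal.mul_rpow_of_nonneg _ _ hβ, mul_mul_mul_comm,
      ← ENNReal.rpow_add_of_nonneg _ _ hα hβ, hαβ, ENNReal.rpow_one, ← ENNReal.rpow_mul,
      ← ENNReal.rpow_mul, ← ENNReal.rpow_add_of_nonneg _ _ (by positivity) (by positivity)]
    ring_nf
  have hmeas : ∀ c : ℝ, AEMeasurable fun ξ ↦ ‖ξ‖ₑ ^ (2 * c) * ‖𝓕 f ξ‖ₑ ^ 2 := fun c ↦ by
    fun_prop
  simp only [homogeneousSobolevNorm, hsplit]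
  refine (ENNReal.rpow_le_rpow
    (ENNReal.lintegral_mul_norm_pow_le (hmeas a) (hmeas b) hα hβ hαβ) (by positivity)).trans_eq ?_
  rw [ENNReal.mul_rpow_of_nonneg _ _ (by positivity)]
  simp only [← ENNReal.rpow_mul, mul_comm]

theorem setLIntegral_ball_enorm_fourier_le [Nontrivial E] (f : 𝓢(E, F)) {s R : ℝ}
    (hs : 2 * s < finrank ℝ E) (hR : 0 < R) :
    ∫⁻ ξ in ball 0 R, ‖𝓕 f ξ‖ₑ ≤
      ENNReal.ofReal √(finrank ℝ E / (finrank ℝ E - 2 * s) * volume.real (ball (0 : E) 1) *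
        R ^ (finrank ℝ E - 2 * s)) * homogeneousSobolevNorm s f := by
  have hsplit : ∀ᵐ ξ ∂volume.restrict (ball (0 : E) R), ‖𝓕 f ξ‖ₑ =
      (‖ξ‖ₑ ^ (-(2 * s))) ^ (1 / 2 : ℝ) * (‖ξ‖ₑ ^ (2 * s) * ‖𝓕 f ξ‖ₑ ^ 2) ^ (1 / 2 : ℝ) := by
    filter_upwards [ae_restrict_of_ae (Measure.ae_ne volume (0 : E))] with ξ hξ
    rw [← ENNReal.mul_rpow_of_nonneg _ _ (by positivity), ← mul_assoc,
      ← ENNReal.rpow_add _ _ (enorm_ne_zero.2 hξ) enorm_ne_top, neg_add_cancel, ENNReal.rpow_zero,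
      one_mul, ← ENNReal.rpow_two, ← ENNReal.rpow_mul]
    norm_num
  calc ∫⁻ ξ in ball 0 R, ‖𝓕 f ξ‖ₑ
    _ ≤ (∫⁻ ξ in ball (0 : E) R, ‖ξ‖ₑ ^ (-(2 * s))) ^ (1 / 2 : ℝ) *
        (∫⁻ ξ in ball 0 R, ‖ξ‖ₑ ^ (2 * s) * ‖𝓕 f ξ‖ₑ ^ 2) ^ (1 / 2 : ℝ) := by
      rw [lintegral_congr_ae hsplit]
      exact ENNReal.lintegral_mul_norm_pow_le (by fun_prop) (by fun_prop) (by norm_num)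
        (by norm_num) (by norm_num)
    _ ≤ ENNReal.ofReal √(finrank ℝ E / (finrank ℝ E - 2 * s) * volume.real (ball (0 : E) 1) *
        R ^ (finrank ℝ E - 2 * s)) * homogeneousSobolevNorm s f := by
      rw [lintegral_ball_enorm_rpow_neg volume hs hR, sqrt_eq_rpow,
        ENNReal.ofReal_rpow_of_nonneg _ (by norm_num), homogeneousSobolevNorm]
      · gcongr
        exact Measure.restrict_le_self
      · have : 0 < finrank ℝ E - 2 * s := sub_pos.2 hs
        positivity

variable (E) in
/-- The constant `K` of the embedding `‖f‖_{L^q} ≤ K √q ‖f‖_{Ḣ^s}`. The summand `2` makes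
`2 ≤ K √q`, which absorbs the numerical factor of the level set estimate. -/
def sobolevConst : ℝ :=
  2 + 2 * 2 ^ (finrank ℝ E / 2 : ℝ) * √(volume.real (ball (0 : E) 1))

theorem two_le_sobolevConst : 2 ≤ sobolevConst E :=
  le_add_of_nonneg_right (by positivity)

theorem sobolevConst_pos : 0 < sobolevConst E :=
  zero_lt_two.trans_le two_le_sobolevConst

theorem two_mul_setLIntegral_ball_enorm_fourier_le [Nontrivial E] (f : 𝓢(E, F)) {q r s : ℝ}
    (hq : 2 ≤ q) (hs : s = finrank ℝ E * (1 / 2 - 1 / q)) (hr : 0 < r) :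
    2 * ∫⁻ ξ in ball 0 (2 * r), ‖𝓕 f ξ‖ₑ ≤
      ENNReal.ofReal (sobolevConst E * √q * r ^ (finrank ℝ E / q)) *
        homogeneousSobolevNorm s f := by
  have hd : (0 : ℝ) < finrank ℝ E := mod_cast finrank_pos
  have : 0 < q := by linarith
  have hds : finrank ℝ E - 2 * s = finrank ℝ E / q * 2 := by rw [hs]; ring
  have hdq : (finrank ℝ E : ℝ) / (finrank ℝ E / q * 2) = q / 2 := by field_simp
  have hexp : (finrank ℝ E : ℝ) / q ≤ finrank ℝ E / 2 := by gcongr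
  have hlow := setLIntegral_ball_enorm_fourier_le f (s := s) (R := 2 * r)
    (by rw [← sub_pos, hds]; positivity) (by positivity)
  rw [hds, hdq, rpow_mul (by positivity), rpow_two] at hlow
  have hconst : 2 * √(q / 2 * volume.real (ball (0 : E) 1) *
      ((2 * r) ^ (finrank ℝ E / q : ℝ)) ^ 2) ≤
        sobolevConst E * √q * r ^ (finrank ℝ E / q : ℝ) := by
    rw [sqrt_mul (by positivity), sqrt_sq (by positivity), sqrt_mul (by positivity),
      mul_rpow zero_le_two hr.le]
    calc 2 * (√(q / 2) * √(volume.real (ball (0 : E) 1)) *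
          (2 ^ (finrank ℝ E / q : ℝ) * r ^ (finrank ℝ E / q : ℝ)))
      _ ≤ 2 * (√q * √(volume.real (ball (0 : E) 1)) *
          (2 ^ (finrank ℝ E / 2 : ℝ) * r ^ (finrank ℝ E / q : ℝ))) := by
        gcongr
        · linarith
        · norm_num
      _ = 2 * 2 ^ (finrank ℝ E / 2 : ℝ) * √(volume.real (ball (0 : E) 1)) * √q *
          r ^ (finrank ℝ E / q : ℝ) := by ring
      _ ≤ sobolevConst E * √q * r ^ (finrank ℝ E / q : ℝ) := by
        gcongr
        exact le_add_of_nonneg_left zero_le_two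
  grw [hlow, ← hconst, ENNReal.ofReal_mul zero_le_two, ENNReal.ofReal_ofNat, ← mul_assoc]

end NormedSpace

variable [InnerProductSpace ℂ F] [CompleteSpace F]

theorem lintegral_enorm_sq_fourier (f : 𝓢(E, F)) :
    ∫⁻ ξ, ‖𝓕 f ξ‖ₑ ^ 2 = ∫⁻ x, ‖f x‖ₑ ^ 2 := by
  have hofReal : ∀ g : 𝓢(E, F), ∫⁻ x, ‖g x‖ₑ ^ 2 = ENNReal.ofReal (∫ x, ‖g x‖ ^ 2) := fun g ↦ by
    have hint : Integrable (fun x ↦ ‖g x‖ ^ 2) := by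
      simpa using (g.memLp 2).integrable_norm_pow two_ne_zero
    rw [ofReal_integral_eq_lintegral_ofReal hint (.of_forall fun x ↦ by positivity)]
    simp [ENNReal.ofReal_pow]
  rw [hofReal, hofReal, SchwartzMap.integral_norm_sq_fourier]

theorem exists_add_eq_of_frequency_cutoff (f : 𝓢(E, F)) {r : ℝ} (hr : 0 < r) :
    ∃ g h : 𝓢(E, F), g + h = f ∧
      (∀ x, ‖g x‖ₑ ≤ ∫⁻ ξ in ball 0 (2 * r), ‖𝓕 f ξ‖ₑ) ∧
      ∫⁻ x, ‖h x‖ₑ ^ 2 ≤ ∫⁻ ξ in (closedBall 0 r)ᶜ, ‖𝓕 f ξ‖ₑ ^ 2 := by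
  let χ : ContDiffBump (0 : E) := ⟨r, 2 * r, hr, by linarith⟩
  have hχ : (χ : E → ℝ).HasTemperateGrowth := χ.hasCompactSupport.hasTemperateGrowth χ.contDiff
  set g := SchwartzMap.smulLeftCLM F χ (𝓕 f) with hg
  refine ⟨𝓕⁻ g, 𝓕⁻ (𝓕 f - g), ?_, fun x ↦ ?_, ?_⟩
  · rw [← FourierTransform.fourierInv_add, add_sub_cancel,
      FourierTransform.fourierInv_fourier_eq]
  · rw [← lintegral_indicator measurableSet_ball]
    refine (enorm_fourierInv_le_lintegral_enorm g x).trans (lintegral_mono fun ξ ↦ ?_)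
    rw [hg, SchwartzMap.smulLeftCLM_apply_apply hχ, enorm_smul]
    by_cases hξ : ξ ∈ ball (0 : E) (2 * r)
    · rw [indicator_of_mem hξ]
      exact mul_le_of_le_one_left' (by simpa [enorm_of_nonneg χ.nonneg] using χ.le_one)
    · simp [hξ, χ.zero_of_le_dist (not_lt.1 hξ)]
  · rw [← lintegral_enorm_sq_fourier, ← lintegral_indicator measurableSet_closedBall.compl,
      FourierTransform.fourier_fourierInv_eq]
    refine lintegral_mono fun ξ ↦ ?_
    have h_high : (𝓕 f - g) ξ = (1 - χ ξ) • 𝓕 f ξ := by simp [hg, hχ, sub_smul]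
    rw [h_high, enorm_smul]
    by_cases hξ : ξ ∈ closedBall (0 : E) r
    · simp [χ.one_of_mem_closedBall hξ]
    · rw [indicator_of_mem hξ]
      gcongr
      exact mul_le_of_le_one_left'
        (by simpa [enorm_of_nonneg (sub_nonneg.2 χ.le_one)] using χ.nonneg)

theorem setLIntegral_lt_norm_enorm_sq_le (f : 𝓢(E, F)) {r t : ℝ} (hr : 0 < r)
    (ht : 2 * ∫⁻ ξ in ball 0 (2 * r), ‖𝓕 f ξ‖ₑ ≤ ENNReal.ofReal t) :
    ∫⁻ x in {x | t < ‖f x‖}, ‖f x‖ₑ ^ 2 ≤ 4 * ∫⁻ ξ in (closedBall 0 r)ᶜ, ‖𝓕 f ξ‖ₑ ^ 2 := by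
  obtain ⟨g, h, rfl, hg, hh⟩ := exists_add_eq_of_frequency_cutoff f hr
  have hlt : MeasurableSet {x | t < ‖(g + h) x‖} :=
    measurableSet_lt measurable_const (g + h).continuous.norm.measurable
  have hhigh : ∀ x ∈ {x | t < ‖(g + h) x‖}, ‖(g + h) x‖ₑ ≤ 2 * ‖h x‖ₑ := by
    intro x (hx : t < ‖(g + h) x‖)
    have hlow : 2 * ‖g x‖ₑ ≤ ‖(g + h) x‖ₑ := calc
      2 * ‖g x‖ₑ ≤ ENNReal.ofReal t := by grw [hg x]; exact ht
      _ ≤ ‖(g + h) x‖ₑ := by rw [← ofReal_norm]; gcongr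
    refine ENNReal.le_of_add_le_add_left (a := ‖(g + h) x‖ₑ) enorm_ne_top ?_
    calc ‖(g + h) x‖ₑ + ‖(g + h) x‖ₑ
      _ ≤ 2 * (‖g x‖ₑ + ‖h x‖ₑ) := by rw [← two_mul]; gcongr; exact enorm_add_le _ _
      _ ≤ ‖(g + h) x‖ₑ + 2 * ‖h x‖ₑ := by rw [mul_add]; gcongr
  calc ∫⁻ x in {x | t < ‖(g + h) x‖}, ‖(g + h) x‖ₑ ^ 2
    _ ≤ ∫⁻ x in {x | t < ‖(g + h) x‖}, (2 * ‖h x‖ₑ) ^ 2 :=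
      setLIntegral_mono' hlt fun x hx ↦ by gcongr; exact hhigh x hx
    _ ≤ ∫⁻ x, 4 * ‖h x‖ₑ ^ 2 := by
      refine (setLIntegral_le_lintegral _ _).trans_eq (lintegral_congr fun x ↦ ?_)
      rw [mul_pow]; norm_num
    _ ≤ 4 * ∫⁻ ξ in (closedBall 0 r)ᶜ, ‖𝓕 (g + h) ξ‖ₑ ^ 2 := by
      rw [lintegral_const_mul' _ _ (by norm_num)]
      gcongr

theorem withDensity_enorm_sq_lt_norm_le (f : 𝓢(E, F)) {B κ t : ℝ} (hB : 0 < B) (hκ : 0 < κ)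
    (hlow : ∀ r, 0 < r → 2 * ∫⁻ ξ in ball 0 (2 * r), ‖𝓕 f ξ‖ₑ ≤ ENNReal.ofReal (B * r ^ κ))
    (ht : 0 < t) :
    volume.withDensity (fun x ↦ ‖f x‖ₑ ^ 2) {x | t < ‖f x‖} ≤
      4 * volume.withDensity (fun ξ ↦ ‖𝓕 f ξ‖ₑ ^ 2) {ξ | t < B * ‖ξ‖ ^ κ} := by
  set r := (t / B) ^ κ⁻¹ with hr
  have hr0 : 0 < r := by positivity
  have hBr : B * r ^ κ = t := by
    rw [hr, rpow_inv_rpow (by positivity) hκ.ne', mul_div_cancel₀ _ hB.ne']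
  have hset : {ξ : E | t < B * ‖ξ‖ ^ κ} = (closedBall 0 r)ᶜ := by
    ext ξ
    simp [← hBr, hB, rpow_lt_rpow_iff hr0.le (norm_nonneg ξ) hκ]
  rw [hset, withDensity_apply _ (measurableSet_lt measurable_const f.continuous.norm.measurable),
    withDensity_apply _ measurableSet_closedBall.compl]
  exact setLIntegral_lt_norm_enorm_sq_le f hr0 (hBr ▸ hlow r hr0)

theorem lintegral_enorm_rpow_add_two_le (f : 𝓢(E, F)) {B κ p : ℝ} (hB : 0 < B) (hκ : 0 < κ)
    (hp : 0 ≤ p)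
    (hlow : ∀ r, 0 < r → 2 * ∫⁻ ξ in ball 0 (2 * r), ‖𝓕 f ξ‖ₑ ≤ ENNReal.ofReal (B * r ^ κ)) :
    ∫⁻ x, ‖f x‖ₑ ^ (p + 2) ≤
      4 * ENNReal.ofReal (B ^ p) * ∫⁻ ξ, ‖ξ‖ₑ ^ (κ * p) * ‖𝓕 f ξ‖ₑ ^ 2 := by
  rcases hp.eq_or_lt with rfl | hp
  · simpa [lintegral_enorm_sq_fourier] using
      le_mul_of_one_le_left' (a := ∫⁻ x, ‖f x‖ₑ ^ 2) (b := 4) (by norm_num)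
  have hf : Measurable fun x ↦ ‖f x‖ₑ ^ 2 := f.continuous.enorm.measurable.pow_const 2
  have hFf : Measurable fun ξ ↦ ‖𝓕 f ξ‖ₑ ^ 2 := (𝓕 f).continuous.enorm.measurable.pow_const 2
  have hcake := lintegral_rpow_le_of_meas_lt_le (C := 4) f.continuous.norm.aemeasurable
    (fun x ↦ norm_nonneg (f x)) (by fun_prop) (fun ξ ↦ by positivity)
    (fun t ht ↦ withDensity_enorm_sq_lt_norm_le f hB hκ hlow ht) hp
  rw [lintegral_withDensity_eq_lintegral_mul _ hf
      (f.continuous.norm.measurable.pow_const p).ennreal_ofReal,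
    lintegral_withDensity_eq_lintegral_mul _ hFf (by fun_prop)] at hcake
  calc ∫⁻ x, ‖f x‖ₑ ^ (p + 2)
    _ = ∫⁻ x, ‖f x‖ₑ ^ 2 * ENNReal.ofReal (‖f x‖ ^ p) := lintegral_congr fun x ↦ by
      rw [ENNReal.rpow_add_of_nonneg _ _ hp.le zero_le_two, mul_comm, ENNReal.rpow_two,
        ← ENNReal.ofReal_rpow_of_nonneg (norm_nonneg _) hp.le, ofReal_norm]
    _ ≤ 4 * ∫⁻ ξ, ‖𝓕 f ξ‖ₑ ^ 2 * ENNReal.ofReal ((B * ‖ξ‖ ^ κ) ^ p) := mod_cast hcake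
    _ = 4 * ∫⁻ ξ, ENNReal.ofReal (B ^ p) * (‖ξ‖ₑ ^ (κ * p) * ‖𝓕 f ξ‖ₑ ^ 2) := by
      congr 1
      refine lintegral_congr fun ξ ↦ ?_
      rw [mul_rpow hB.le (by positivity), ← rpow_mul (norm_nonneg ξ),
        ENNReal.ofReal_mul (by positivity),
        ← ENNReal.ofReal_rpow_of_nonneg (norm_nonneg _) (by positivity), ofReal_norm]
      ring
    _ = 4 * ENNReal.ofReal (B ^ p) * ∫⁻ ξ, ‖ξ‖ₑ ^ (κ * p) * ‖𝓕 f ξ‖ₑ ^ 2 := by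
      rw [lintegral_const_mul' _ _ ENNReal.ofReal_ne_top, mul_assoc]

theorem homogeneousSobolevNorm_zero (f : 𝓢(E, F)) :
    homogeneousSobolevNorm 0 f = eLpNorm f 2 volume := by
  simp [homogeneousSobolevNorm, lintegral_enorm_sq_fourier,
    eLpNorm_eq_lintegral_rpow_enorm_toReal two_ne_zero ENNReal.ofNat_ne_top]

theorem eLpNorm_le_of_forall_two_mul_setLIntegral_le (f : 𝓢(E, F)) {B κ q s : ℝ} (hq : 2 ≤ q)
    (hB : 0 < B) (hκ : 0 < κ) (hs : κ * (q - 2) = 2 * s)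
    (hlow : ∀ r, 0 < r → 2 * ∫⁻ ξ in ball 0 (2 * r), ‖𝓕 f ξ‖ₑ ≤ ENNReal.ofReal (B * r ^ κ))
    (hN : 2 * homogeneousSobolevNorm s f ≤ ENNReal.ofReal B) :
    eLpNorm f (ENNReal.ofReal q) volume ≤ ENNReal.ofReal B := by
  have hq0 : 0 < q := by linarith
  rw [eLpNorm_eq_lintegral_rpow_enorm_toReal (by simpa) ENNReal.ofReal_ne_top,
    ENNReal.toReal_ofReal hq0.le, one_div, ENNReal.rpow_inv_le_iff hq0]
  calc ∫⁻ x, ‖f x‖ₑ ^ q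
    _ ≤ 4 * ENNReal.ofReal (B ^ (q - 2)) * homogeneousSobolevNorm s f ^ 2 := by
      rw [homogeneousSobolevNorm_sq, ← hs]
      simpa using lintegral_enorm_rpow_add_two_le f hB hκ (sub_nonneg.2 hq) hlow
    _ = ENNReal.ofReal (B ^ (q - 2)) * (2 * homogeneousSobolevNorm s f) ^ 2 := by
      ring
    _ ≤ ENNReal.ofReal (B ^ (q - 2)) * ENNReal.ofReal B ^ 2 := by gcongr
    _ = ENNReal.ofReal B ^ q := by
      rw [← ENNReal.ofReal_rpow_of_pos hB, ← ENNReal.rpow_two, ← ENNReal.rpow_add _ _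
        (ENNReal.ofReal_pos.2 hB).ne' ENNReal.ofReal_ne_top, sub_add_cancel]

theorem eLpNorm_le_sqrt_mul_homogeneousSobolevNorm [Nontrivial E] (f : 𝓢(E, F)) {q s : ℝ}
    (hq : 2 ≤ q) (hs : s = finrank ℝ E * (1 / 2 - 1 / q)) :
    eLpNorm f (ENNReal.ofReal q) volume ≤
      ENNReal.ofReal (sobolevConst E * √q) * homogeneousSobolevNorm s f := by
  have hd : (0 : ℝ) < finrank ℝ E := mod_cast finrank_pos
  have : 0 < q := by linarith
  have hA : 2 ≤ sobolevConst E * √q :=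
    two_le_sobolevConst.trans <|
      le_mul_of_one_le_right sobolevConst_pos.le (one_le_sqrt.2 (by linarith))
  set A := sobolevConst E * √q
  have hA0 : 0 < A := zero_lt_two.trans_le hA
  have hbound : ∀ M : ℝ≥0, homogeneousSobolevNorm s f < M →
      eLpNorm f (ENNReal.ofReal q) volume ≤ ENNReal.ofReal A * M := by
    intro M hM
    have hM0 : 0 < (M : ℝ) := NNReal.coe_pos.2 (ENNReal.coe_pos.1 (pos_of_gt hM))
    rw [← ENNReal.ofReal_coe_nnreal, ← ENNReal.ofReal_mul hA0.le]
    refine eLpNorm_le_of_forall_two_mul_setLIntegral_le f (s := s) (κ := finrank ℝ E / q) hq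
      (by positivity) (by positivity) (by rw [hs]; field_simp) (fun r hr ↦ ?_) ?_
    · grw [two_mul_setLIntegral_ball_enorm_fourier_le f hq hs hr, hM.le, mul_right_comm A,
        ENNReal.ofReal_mul (q := M) (by positivity), ENNReal.ofReal_coe_nnreal]
    · rw [ENNReal.ofReal_mul hA0.le, ENNReal.ofReal_coe_nnreal]
      gcongr
      exact ENNReal.ofNat_le_ofReal.2 hA
  suffices eLpNorm f (ENNReal.ofReal q) volume / ENNReal.ofReal A ≤ homogeneousSobolevNorm s f by
    rwa [ENNReal.div_le_iff' (by simpa) ENNReal.ofReal_ne_top] at this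
  refine le_of_forall_gt_imp_ge_of_dense fun M hM ↦ ?_
  rcases eq_or_ne M ∞ with rfl | hM_top
  · exact le_top
  lift M to ℝ≥0 using hM_top
  exact ENNReal.div_le_of_le_mul' (hbound M hM)

theorem lintegral_enorm_sq_lineDeriv (f : 𝓢(E, F)) (v : E) :
    ∫⁻ x, ‖∂_{v} f x‖ₑ ^ 2 =
      ENNReal.ofReal (2 * π) ^ 2 * ∫⁻ ξ, ‖inner ℝ ξ v‖ₑ ^ 2 * ‖𝓕 f ξ‖ₑ ^ 2 := by
  have hv : (inner ℝ · v).HasTemperateGrowth := ((innerSL ℝ).flip v).hasTemperateGrowth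
  rw [← lintegral_enorm_sq_fourier, SchwartzMap.fourier_lineDerivOp_eq,
    ← lintegral_const_mul' _ _ (by finiteness)]
  refine lintegral_congr fun ξ ↦ ?_
  have h2πi : ‖(2 * π * Complex.I : ℂ)‖ₑ = ENNReal.ofReal (2 * π) := by
    rw [← ofReal_norm]; simp [abs_of_pos pi_pos]
  rw [smul_apply, SchwartzMap.smulLeftCLM_apply_apply hv, enorm_smul, enorm_smul, h2πi,
    mul_pow, mul_pow]

theorem sum_lintegral_enorm_sq_lineDeriv {ι : Type*} [Fintype ι] (b : OrthonormalBasis ι ℝ E)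
    (f : 𝓢(E, F)) :
    ∑ i, ∫⁻ x, ‖∂_{b i} f x‖ₑ ^ 2 =
      ENNReal.ofReal (2 * π) ^ 2 * homogeneousSobolevNorm 1 f ^ 2 := by
  have hparseval : ∀ ξ, ∑ i, ‖inner ℝ ξ (b i)‖ₑ ^ 2 = ‖ξ‖ₑ ^ 2 := by
    intro ξ
    simp only [← ofReal_norm, ← ENNReal.ofReal_pow (norm_nonneg _)]
    rw [← b.sum_sq_norm_inner_left, ENNReal.ofReal_sum_of_nonneg fun i _ ↦ by positivity]
  simp only [lintegral_enorm_sq_lineDeriv, ← Finset.mul_sum]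
  rw [← lintegral_finsetSum _ fun i _ ↦ by fun_prop, homogeneousSobolevNorm_sq]
  simp only [← Finset.sum_mul, hparseval, mul_one, ENNReal.rpow_two]

theorem homogeneousSobolevNorm_one_le (f : 𝓢(E, F)) :
    homogeneousSobolevNorm 1 f ≤
      ENNReal.ofReal √(finrank ℝ E) * eLpNorm (fun x ↦ ‖fderiv ℝ f x‖) 2 volume := by
  have hgrad : eLpNorm (fun x ↦ ‖fderiv ℝ f x‖) 2 volume ^ 2 = ∫⁻ x, ‖fderiv ℝ f x‖ₑ ^ 2 := by
    simpa [eLpNorm_norm] using eLpNorm_nnreal_pow_eq_lintegral (μ := volume)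
      (f := fderiv ℝ f) (p := 2) two_ne_zero
  have hderiv : ∀ i x, ‖∂_{stdOrthonormalBasis ℝ E i} f x‖ₑ ≤ ‖fderiv ℝ f x‖ₑ := fun i x ↦ by
    simpa [SchwartzMap.lineDerivOp_apply_eq_fderiv] using
      (fderiv ℝ f x).le_opENorm (stdOrthonormalBasis ℝ E i)
  refine (ENNReal.pow_le_pow_left_iff two_ne_zero).1 ?_
  calc homogeneousSobolevNorm 1 f ^ 2
    _ ≤ ENNReal.ofReal (2 * π) ^ 2 * homogeneousSobolevNorm 1 f ^ 2 :=
      le_mul_of_one_le_left' <| one_le_pow₀ <| ENNReal.one_le_ofReal.2 <| by linarith [pi_gt_three]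
    _ = ∑ i, ∫⁻ x, ‖∂_{stdOrthonormalBasis ℝ E i} f x‖ₑ ^ 2 :=
      (sum_lintegral_enorm_sq_lineDeriv _ f).symm
    _ ≤ ∑ _ : Fin (finrank ℝ E), ∫⁻ x, ‖fderiv ℝ f x‖ₑ ^ 2 := by
      gcongr with i _ x
      exact hderiv i x
    _ = (ENNReal.ofReal √(finrank ℝ E) * eLpNorm (fun x ↦ ‖fderiv ℝ f x‖) 2 volume) ^ 2 := by
      rw [Finset.sum_const, Finset.card_univ, Fintype.card_fin, nsmul_eq_mul, mul_pow, hgrad,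
        ← ENNReal.ofReal_pow (by positivity), sq_sqrt (by positivity), ENNReal.ofReal_natCast]

end Fourier

theorem statement3_general {E F : Type*} [NormedAddCommGroup E] [InnerProductSpace ℝ E]
    [FiniteDimensional ℝ E] [Nontrivial E] [MeasurableSpace E] [BorelSpace E]
    [NormedAddCommGroup F] [InnerProductSpace ℂ F] [CompleteSpace F] :
    ∃ C : ℝ, 0 < C ∧ ∀ (f : 𝓢(E, F)) (q s : ℝ), 2 ≤ q →
      s = finrank ℝ E * (1 / 2 - 1 / q) → s ≤ 1 →
      eLpNorm f (ENNReal.ofReal q) volume ≤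
        ENNReal.ofReal (C * √q) * eLpNorm f 2 volume ^ (1 - s) *
          eLpNorm (fun x ↦ ‖fderiv ℝ f x‖) 2 volume ^ s := by
  have hd : (1 : ℝ) ≤ finrank ℝ E := mod_cast finrank_pos
  refine ⟨sobolevConst E * √(finrank ℝ E), mul_pos sobolevConst_pos (by positivity),
    fun f q s hq hs hs1 ↦ ?_⟩
  have hs0 : 0 ≤ s := by
    rw [hs]
    exact mul_nonneg (by positivity) (sub_nonneg.2 (by gcongr))
  have hinterp : homogeneousSobolevNorm s f ≤
      eLpNorm f 2 volume ^ (1 - s) * homogeneousSobolevNorm 1 f ^ s := by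
    simpa [homogeneousSobolevNorm_zero] using homogeneousSobolevNorm_convexComb_le f le_rfl
      zero_le_one (sub_nonneg.2 hs1) hs0 (sub_add_cancel 1 s)
  have hconst : ENNReal.ofReal √(finrank ℝ E) ^ s ≤ ENNReal.ofReal √(finrank ℝ E) :=
    ENNReal.rpow_le_rpow_of_exponent_le (ENNReal.one_le_ofReal.2 (one_le_sqrt.2 hd)) hs1 |>.trans_eq
      (ENNReal.rpow_one _)
  grw [eLpNorm_le_sqrt_mul_homogeneousSobolevNorm f hq hs, hinterp,
    homogeneousSobolevNorm_one_le f, ENNReal.mul_rpow_of_nonneg _ _ hs0, hconst,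
    mul_right_comm _ √(finrank ℝ E : ℝ), ENNReal.ofReal_mul (q := √(finrank ℝ E : ℝ)) (by
      have := sobolevConst_pos (E := E); positivity)]
  exact le_of_eq (by ring)

/-- Two-dimensional Gagliardo–Nirenberg inequality with explicit growth `√q` of the
constant: for Schwartz `f` on `ℝ²` and `q ∈ [2,∞)`,
`‖f‖_{L^q} ≤ C·√q·‖f‖_{L²}^{2/q}·‖∇f‖_{L²}^{1-2/q}` with `C` independent of `q`. -/
theorem statement3 :
    ∃ C : ℝ, 0 < C ∧ ∀ (f : SchwartzMap R2 ℂ) (q : ℝ), 2 ≤ q →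
      eLpNorm (⇑f) (ENNReal.ofReal q) volume ≤
        ENNReal.ofReal (C * Real.sqrt q) * eLpNorm (⇑f) 2 volume ^ (2 / q) *
          eLpNorm (fun x => ‖fderiv ℝ (⇑f) x‖) 2 volume ^ (1 - 2 / q) := by
  obtain ⟨C, hC, h⟩ := statement3_general (E := R2) (F := ℂ)
  refine ⟨C, hC, fun f q hq ↦ ?_⟩
  have hs : 1 - 2 / q = finrank ℝ R2 * (1 / 2 - 1 / q) := by
    rw [finrank_euclideanSpace_fin]; push_cast; ring
  simpa using h f q (1 - 2 / q) hq hs (sub_le_self _ (by positivity))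

end
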